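/- Let G = (V, c) be an infinite, connected weighted graph with a finite exhaustion (V_n), and let x, y ∈ V with x ≠ y. Then P_x[τ_x⁺ = τ_y = ∞] = lim_{n→∞} P̄^n_x[τ_{V_n*} < min(τ_x⁺, τ_y)] = lim_{n→∞} ( P̄^n_x[τ_{V_n*} < τ_x⁺ < τ_y] + P̄^n_x[τ_{V_n*} < τ_y < τ_x⁺] ). -/

import Mathlib

/-!
Two finite-time facts about a walk started at `x` carry the proof. The probability of staying in a
finite set `D` after time `0` until `T` is reached is a sum of products of transition probabilities
between vertices of `{x} ∪ D` and `D ∪ T` (`measure_reachEvent`). And a walk almost surely leaves a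
finite set from which it can escape (`measure_stay_forever`): the probabilities of remaining there
decrease to a solution of `u = Q u`, where `Q` is the transition matrix killed outside the set, and
`u` vanishes by the maximum principle.

Let `A = Vₙ` contain `x` and `y`. The second fact, applied to the extended graph without `x`, shows
that its walk returns to `x` almost surely (`ext_returns`). Hence, up to a null set, the walk fails
to visit a boundary copy before `min(τ_x⁺, τ_y)` exactly when it reaches `{x, y}` through
`A ∖ {x, y}` (`ext_event_ae`). As the degrees of vertices of `A` in the extended graph and in `G`
agree, the first fact gives this event the same probability under the walk on `G`
(`ext_measure_eq`). There the events increase with `n` to `{min(τ_x⁺, τ_y) < ∞}`, and continuity from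
below gives the first limit (`tendsto_reachEvent`). The second sequence has the same terms as the
first, because `τ_x⁺ = τ_y` forces both to be infinite (`ext_sum_eq`).
-/

open MeasureTheory Filter Topology Classical
open scoped ENNReal

noncomputable section

/-- A weighted graph on an (at most countable) vertex set `V`. -/
structure WeightedGraph (V : Type) where
  c : V → V → ℝ
  nonneg : ∀ x y, 0 ≤ c x y
  symm : ∀ x y, c x y = c y x
  loopless : ∀ x, c x x = 0
  row_summable : ∀ x, Summable (c x)

namespace WeightedGraph

variable {V : Type}

/-- adjacency: positive weight -/
def Adj (G : WeightedGraph V) (x y : V) : Prop := 0 < G.c x y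

/-- connectivity of a weighted graph -/
def Connected (G : WeightedGraph V) : Prop :=
  ∀ x y : V, Relation.ReflTransGen G.Adj x y

/-- `c_x`, the total weight at `x` -/
def deg (G : WeightedGraph V) (x : V) : ℝ := ∑' y, G.c x y

/-- `p(x,y) = c(x,y)/c_x`, the transition matrix of the random walk on `G` -/
def trans (G : WeightedGraph V) (x y : V) : ℝ := G.c x y / G.deg x

/-- `G` is a subgraph of an infinite line -/
def IsSubgraphOfLine (G : WeightedGraph V) : Prop :=
  ∃ f : V → ℤ, Function.Injective f ∧ ∀ x y : V, 0 < G.c x y → |f x - f y| = 1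

/-- weights of the induced subgraph on a finite vertex set `A` -/
def restrictW (G : WeightedGraph V) (A : Finset V) (x y : V) : ℝ :=
  if x ∈ A ∧ y ∈ A then G.c x y else 0

/-- `(c_n)_x`, the degree inside `A` -/
def degIn (G : WeightedGraph V) (A : Finset V) (x : V) : ℝ := ∑ y ∈ A, G.c x y

/-- `p_n`, transition matrix of the induced walk (zero outside of `A`) -/
def transIn (G : WeightedGraph V) (A : Finset V) (x y : V) : ℝ :=
  restrictW G A x y / degIn G A x

/-- the inner boundary `∂ᵢA` -/
def innerBoundary (G : WeightedGraph V) (A : Finset V) : Set V :=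
  {v | v ∈ A ∧ ∃ w, w ∉ A ∧ 0 < G.c v w}

/-- weights `c̄ₙ` of the extended graph `Ḡₙ`, realized on `V ⊕ V` where `Sum.inr v`
plays the role of the boundary copy `v̄`. -/
def extW (G : WeightedGraph V) (A : Finset V) : V ⊕ V → V ⊕ V → ℝ
  | Sum.inl x, Sum.inl y => if x ∈ A ∧ y ∈ A then G.c x y else 0
  | Sum.inl v, Sum.inr w => if v = w ∧ v ∈ A then ∑' z, (if z ∈ A then 0 else G.c v z) else 0
  | Sum.inr w, Sum.inl v => if v = w ∧ v ∈ A then ∑' z, (if z ∈ A then 0 else G.c v z) else 0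
  | Sum.inr _, Sum.inr _ => 0

/-- `(c̄ₙ)_s` -/
def extDeg (G : WeightedGraph V) (A : Finset V) (s : V ⊕ V) : ℝ := ∑' t, extW G A s t

/-- `p̄ₙ`, the transition matrix of the random walk on the extended graph -/
def extTrans (G : WeightedGraph V) (A : Finset V) (s t : V ⊕ V) : ℝ :=
  extW G A s t / extDeg G A s

/-- the set `Vₙ* = V̄ₙ ∖ Vₙ` of boundary copies, as a subset of `V ⊕ V` -/
def boundaryCopies (G : WeightedGraph V) (A : Finset V) : Set (V ⊕ V) :=
  {s | ∃ v ∈ innerBoundary G A, s = Sum.inr v}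

/-- a finite exhaustion whose induced subgraphs are connected -/
def IsExhaustion (G : WeightedGraph V) (Vn : ℕ → Finset V) : Prop :=
  (∀ n, Vn n ⊆ Vn (n + 1)) ∧ (∀ x : V, ∃ n, x ∈ Vn n) ∧
    ∀ n, ∀ x ∈ Vn n, ∀ y ∈ Vn n,
      Relation.ReflTransGen (fun a b => a ∈ Vn n ∧ b ∈ Vn n ∧ 0 < G.c a b) x y

end WeightedGraph

/-- the first hitting time `τ_A` of a set `A` (`⊤` if `A` is never visited) -/
def hitTime {S : Type} (A : Set S) (ω : ℕ → S) : ℕ∞ :=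
  sInf {n : ℕ∞ | ∃ k : ℕ, (k : ℕ∞) = n ∧ ω k ∈ A}

/-- the hitting time `τ_A⁺` of a set `A` after time zero -/
def hitTime1 {S : Type} (A : Set S) (ω : ℕ → S) : ℕ∞ :=
  sInf {n : ℕ∞ | ∃ k : ℕ, 1 ≤ k ∧ (k : ℕ∞) = n ∧ ω k ∈ A}

/-- the product σ-algebra `(2^S)^{⊗ℕ}` on the trajectory space `S^{ℕ₀}` -/
def trajMS (S : Type) : MeasurableSpace (ℕ → S) :=
  @MeasurableSpace.pi ℕ (fun _ => S) (fun _ => ⊤)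

/-- measures on the trajectory space -/
abbrev TrajMeasure (S : Type) := @MeasureTheory.Measure (ℕ → S) (trajMS S)

/-- `μ` is (the law of) the Markov chain with transition matrix `p` and initial
distribution `δ_x`: a probability measure with the prescribed cylinder probabilities. -/
def IsRandomWalk {S : Type} (p : S → S → ℝ) (x : S) (μ : TrajMeasure S) : Prop :=
  μ Set.univ = 1 ∧
    ∀ (n : ℕ) (f : ℕ → S),
      μ {ω | ∀ k ≤ n, ω k = f k} =
        (if f 0 = x then 1 else 0) *
          ∏ k ∈ Finset.range n, ENNReal.ofReal (p (f k) (f (k + 1)))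

/-- the family of walks `P` is recurrent: `P_x[τ_x⁺ < ∞] = 1` for every start `x` -/
def IsRecurrentFamily {V : Type} (P : V → TrajMeasure V) : Prop :=
  ∀ x : V, P x {ω | hitTime1 {x} ω < ⊤} = 1

/-- `l` is a path `x → y` with respect to the weight function `w`: it starts at `x`,
ends at `y`, has positive weights along all of its steps, and avoids `x` and `y`
in its interior. -/
def IsPathBetween {S : Type} (w : S → S → ℝ) (x y : S) (l : List S) : Prop :=
  2 ≤ l.length ∧ l.head? = some x ∧ l.getLast? = some y ∧
    l.Chain' (fun a b => 0 < w a b) ∧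
    ∀ (i : ℕ) (h : i < l.length), 0 < i → i + 1 < l.length →
      l.get ⟨i, h⟩ ≠ x ∧ l.get ⟨i, h⟩ ≠ y

/-- the probability of a finite path: the product of the transition probabilities
along its steps -/
def pathProb {S : Type} (p : S → S → ℝ) (l : List S) : ℝ≥0∞ :=
  ENNReal.ofReal (((l.zip l.tail).map fun q => p q.1 q.2).prod)

/-- the projection `π` which removes all steps of the form `(v̄, v)`, i.e. collapses
every excursion `(v, v̄, v)` to a boundary copy to the single vertex `v` -/
def projPath {V : Type} (l : List (V ⊕ V)) : List V :=
  List.destutter (· ≠ ·) (l.filterMap Sum.getLeft?)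

end


/-! ### Hitting times -/

section Walk
attribute [local instance] trajMS

variable {S : Type}

lemma measurableSet_coord (k : ℕ) (A : Set S) : MeasurableSet {ω : ℕ → S | ω k ∈ A} := by
  let _ : MeasurableSpace S := ⊤
  exact (measurable_pi_apply (X := fun _ : ℕ => S) k) (MeasurableSpace.measurableSet_top (s := A))

lemma hitTime_lt_iff {A : Set S} {ω : ℕ → S} {b : ℕ∞} :
    hitTime A ω < b ↔ ∃ k : ℕ, ω k ∈ A ∧ (k : ℕ∞) < b := by
  unfold hitTime
  rw [sInf_lt_iff]
  constructor
  · rintro ⟨_, ⟨k, rfl, h⟩, hb⟩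
    exact ⟨k, h, hb⟩
  · rintro ⟨k, h, hb⟩
    exact ⟨_, ⟨k, rfl, h⟩, hb⟩

lemma hitTime1_lt_iff {A : Set S} {ω : ℕ → S} {b : ℕ∞} :
    hitTime1 A ω < b ↔ ∃ k : ℕ, 1 ≤ k ∧ ω k ∈ A ∧ (k : ℕ∞) < b := by
  unfold hitTime1
  rw [sInf_lt_iff]
  constructor
  · rintro ⟨_, ⟨k, hk, rfl, h⟩, hb⟩
    exact ⟨k, hk, h, hb⟩
  · rintro ⟨k, hk, h, hb⟩
    exact ⟨_, ⟨k, hk, rfl, h⟩, hb⟩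

lemma coe_lt_hitTime_iff {A : Set S} {ω : ℕ → S} {k : ℕ} :
    (k : ℕ∞) < hitTime A ω ↔ ∀ j ≤ k, ω j ∉ A := by
  rw [← not_le, ← ENat.lt_add_one_iff (ENat.natCast_ne_top k), hitTime_lt_iff]
  push Not
  constructor
  · intro h j hj hA
    have := h j hA
    norm_cast at this
    omega
  · intro h j hA
    by_contra! hc
    norm_cast at hc
    exact h j (by omega) hA

lemma coe_lt_hitTime1_iff {A : Set S} {ω : ℕ → S} {k : ℕ} :
    (k : ℕ∞) < hitTime1 A ω ↔ ∀ j, 1 ≤ j → j ≤ k → ω j ∉ A := by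
  rw [← not_le, ← ENat.lt_add_one_iff (ENat.natCast_ne_top k), hitTime1_lt_iff]
  push Not
  constructor
  · intro h j h1 hj hA
    have := h j h1 hA
    norm_cast at this
    omega
  · intro h j h1 hA
    by_contra! hc
    norm_cast at hc
    exact h j h1 (by omega) hA

lemma hitTime_eq_top_iff {A : Set S} {ω : ℕ → S} : hitTime A ω = ⊤ ↔ ∀ k, ω k ∉ A := by
  rw [← not_lt_top_iff, hitTime_lt_iff]
  push Not
  simp

lemma hitTime1_eq_top_iff {A : Set S} {ω : ℕ → S} :
    hitTime1 A ω = ⊤ ↔ ∀ k, 1 ≤ k → ω k ∉ A := by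
  rw [← not_lt_top_iff, hitTime1_lt_iff]
  push Not
  simp

lemma measurableSet_hitTime_lt (A : Set S) {τ : (ℕ → S) → ℕ∞}
    (hτ : ∀ k : ℕ, MeasurableSet {ω | (k : ℕ∞) < τ ω}) :
    MeasurableSet {ω | hitTime A ω < τ ω} := by
  have : {ω | hitTime A ω < τ ω} = ⋃ k : ℕ, {ω | ω k ∈ A} ∩ {ω | (k : ℕ∞) < τ ω} := by
    ext ω
    simp [hitTime_lt_iff]
  rw [this]
  exact MeasurableSet.iUnion fun k => (measurableSet_coord k A).inter (hτ k)

lemma measurableSet_coe_lt_hitTime (A : Set S) (k : ℕ) :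
    MeasurableSet {ω | (k : ℕ∞) < hitTime A ω} := by
  simp only [coe_lt_hitTime_iff, Set.ofPred_forall]
  exact MeasurableSet.iInter fun j => MeasurableSet.iInter fun _ => measurableSet_coord j Aᶜ

lemma measurableSet_coe_lt_hitTime1 (A : Set S) (k : ℕ) :
    MeasurableSet {ω | (k : ℕ∞) < hitTime1 A ω} := by
  simp only [coe_lt_hitTime1_iff, Set.ofPred_forall]
  exact MeasurableSet.iInter fun j => MeasurableSet.iInter fun _ => MeasurableSet.iInter fun _ =>
    measurableSet_coord j Aᶜ

/-! ### The Markov property and finite-time probabilities -/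

variable {p : S → S → ℝ} {x : S} {μ : TrajMeasure S}

lemma walk_start_ae (h : IsRandomWalk p x μ) : ∀ᵐ ω ∂μ, ω 0 = x := by
  have : IsProbabilityMeasure μ := ⟨h.1⟩
  have h0 := h.2 0 (fun _ => x)
  simp only [nonpos_iff_eq_zero, forall_eq, if_true, Finset.range_zero, Finset.prod_empty,
    mul_one] at h0
  rw [← prob_compl_eq_zero_iff] at h0
  · exact h0
  · simpa using measurableSet_coord 0 {x}

/-- The Markov property, for an event `E` that depends on the first `n + 1` positions only. -/
lemma walk_step [Countable S] (h : IsRandomWalk p x μ) (n : ℕ) (E : Set (ℕ → S))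
    (hE : ∀ ω ω' : ℕ → S, (∀ k ≤ n, ω k = ω' k) → ω ∈ E → ω' ∈ E) (s t : S) :
    μ {ω | ω ∈ E ∧ ω n = s ∧ ω (n + 1) = t} =
      μ {ω | ω ∈ E ∧ ω n = s} * ENNReal.ofReal (p s t) := by
  -- prefixes are extended to trajectories by the constant `t`
  let ext : (Fin (n + 1) → S) → ℕ → S := fun g k => if hk : k < n + 1 then g ⟨k, hk⟩ else t
  have ext_le : ∀ (ω : ℕ → S) (g : Fin (n + 1) → S),
      (fun i : Fin (n + 1) => ω i) = g ↔ ∀ k ≤ n, ω k = ext g k := by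
    intro ω g
    constructor
    · rintro rfl k hk
      simp only [ext, dif_pos (Nat.lt_succ_of_le hk)]
    · intro hg
      funext i
      have := hg i (Nat.le_of_lt_succ i.2)
      simpa only [ext, dif_pos i.2] using this
  have ext_succ : ∀ g, ext g (n + 1) = t := fun g => by simp [ext]
  let J : Set (Fin (n + 1) → S) := {g | ext g ∈ E ∧ ext g n = s}
  let r : (ℕ → S) → (Fin (n + 1) → S) := fun ω i => ω i
  have memJ : ∀ ω, r ω ∈ J ↔ ω ∈ E ∧ ω n = s := by
    intro ω
    have h1 := (ext_le ω (r ω)).1 rfl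
    constructor
    · rintro ⟨a, b⟩
      exact ⟨hE _ _ (fun k hk => (h1 k hk).symm) a, (h1 n le_rfl).trans b⟩
    · rintro ⟨a, b⟩
      exact ⟨hE _ _ h1 a, (h1 n le_rfl).symm.trans b⟩
  have hcyl : ∀ g, r ⁻¹' {g} = {ω | ∀ k ≤ n, ω k = ext g k} := by
    intro g
    ext ω
    exact ext_le ω g
  have hmeas : ∀ g, MeasurableSet (r ⁻¹' {g}) := by
    intro g
    rw [hcyl, Set.ofPred_forall]
    refine MeasurableSet.iInter fun k => ?_
    rw [Set.ofPred_forall]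
    exact MeasurableSet.iInter fun _ => measurableSet_coord k {ext g k}
  have key : ∀ g ∈ J, (μ.restrict {ω | ω (n + 1) = t}) (r ⁻¹' {g}) =
      μ (r ⁻¹' {g}) * ENNReal.ofReal (p s t) := by
    intro g hg
    rw [Measure.restrict_apply (hmeas g), hcyl, h.2]
    have : {ω : ℕ → S | ∀ k ≤ n, ω k = ext g k} ∩ {ω | ω (n + 1) = t} =
        {ω | ∀ k ≤ n + 1, ω k = ext g k} := by
      ext ω
      simp only [Set.mem_inter_iff, Set.mem_ofPred_eq]
      constructor
      · rintro ⟨a, b⟩ k hk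
        rcases Nat.le_succ_iff.1 hk with hk | rfl
        · exact a k hk
        · rw [ext_succ]; exact b
      · intro a
        exact ⟨fun k hk => a k (by omega), by rw [a (n + 1) le_rfl, ext_succ]⟩
    rw [this, h.2, Finset.prod_range_succ, ext_succ, hg.2, mul_assoc]
  have e1 : {ω | ω ∈ E ∧ ω n = s} = r ⁻¹' J := by
    ext ω
    exact (memJ ω).symm
  have e2 : {ω | ω ∈ E ∧ ω n = s ∧ ω (n + 1) = t} = r ⁻¹' J ∩ {ω | ω (n + 1) = t} := by
    ext ω
    simp only [Set.mem_inter_iff, Set.mem_preimage, memJ, Set.mem_ofPred_eq, and_assoc]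
  have hm : MeasurableSet {ω : ℕ → S | ω (n + 1) = t} := measurableSet_coord (n + 1) {t}
  rw [e2, ← Measure.restrict_apply' hm, e1,
    ← tsum_measure_preimage_singleton (μ := μ) (Set.to_countable J) (fun g _ => hmeas g),
    ← tsum_measure_preimage_singleton (μ := μ.restrict _) (Set.to_countable J)
      (fun g _ => hmeas g),
    ← ENNReal.tsum_mul_right]
  exact tsum_congr fun g => key g g.2

/-- A walk never leaves a set that it cannot step out of. -/
lemma walk_ae_mem [Countable S] (h : IsRandomWalk p x μ) (F : Set S) (hx : x ∈ F)
    (hF : ∀ s ∈ F, ∀ t ∉ F, p s t = 0) : ∀ᵐ ω ∂μ, ∀ k, ω k ∈ F := by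
  have h1 : ∀ᵐ ω ∂μ, ∀ (k : ℕ) (s t : S), s ∈ F → t ∉ F → ¬ (ω k = s ∧ ω (k + 1) = t) := by
    simp only [ae_all_iff]
    intro k s t hs ht
    have := walk_step h k Set.univ (fun _ _ _ _ => trivial) s t
    rw [hF s hs t ht] at this
    rw [ae_iff]
    simpa using this
  filter_upwards [h1, walk_start_ae h] with ω h1 h0 k
  induction k with
  | zero => exact h0 ▸ hx
  | succ k ih =>
    by_contra hk
    exact h1 k _ _ ih hk ⟨rfl, rfl⟩

/-- The probability that a walk from `x` with transition matrix `p` spends the times `1, …, n`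
in `D` and is at `t` at time `n`. -/
noncomputable def massAt (p : S → S → ℝ) (x : S) (D : Finset S) : ℕ → S → ℝ≥0∞
  | 0, t => if t = x then 1 else 0
  | n + 1, t =>
    if t ∈ D then ∑ s ∈ insert x D, massAt p x D n s * ENNReal.ofReal (p s t) else 0

/-- The trajectories from `x` that spend the times `1, …, n` in `D`. -/
def stayEvent (x : S) (D : Finset S) (n : ℕ) : Set (ℕ → S) :=
  {ω | ω 0 = x ∧ ∀ j, 1 ≤ j → j ≤ n → ω j ∈ D}

lemma measurableSet_stayEvent (x : S) (D : Finset S) (n : ℕ) :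
    MeasurableSet (stayEvent x D n) := by
  have h : MeasurableSet {ω : ℕ → S | ∀ j, 1 ≤ j → j ≤ n → ω j ∈ D} := by
    simp only [Set.ofPred_forall]
    exact MeasurableSet.iInter fun j => MeasurableSet.iInter fun _ => MeasurableSet.iInter fun _ =>
      measurableSet_coord j (D : Set S)
  exact (measurableSet_coord 0 {x}).inter h

lemma stayEvent_mem {D : Finset S} {n : ℕ} {ω : ℕ → S} (h : ω ∈ stayEvent x D n) :
    ω n ∈ insert x D := by
  rcases Nat.eq_zero_or_pos n with rfl | hn
  · simp [h.1]
  · exact Finset.mem_insert_of_mem (h.2 n hn le_rfl)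

/-- Splitting an event inside `stayEvent x D n` according to the position at time `n`. -/
lemma measure_stayEvent_split {D : Finset S} {n : ℕ} {E : Set (ℕ → S)}
    (hE : MeasurableSet E) (hsub : E ⊆ stayEvent x D n) :
    μ E = ∑ s ∈ insert x D, μ {ω | ω ∈ E ∧ ω n = s} := by
  rw [← measure_biUnion_finset]
  · congr 1
    ext ω
    simp only [Set.mem_iUnion, Set.mem_ofPred_eq, exists_prop]
    exact ⟨fun h => ⟨ω n, stayEvent_mem (hsub h), h, rfl⟩, fun ⟨_, _, h, _⟩ => h⟩
  · intro s _ t _ hst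
    rw [Function.onFun, Set.disjoint_left]
    rintro ω ⟨_, h1⟩ ⟨_, h2⟩
    exact hst (h1.symm.trans h2)
  · intro s _
    exact hE.inter (measurableSet_coord n {s})

lemma measure_stayEvent_next [Countable S] (h : IsRandomWalk p x μ) (D : Finset S) (n : ℕ)
    (t : S) :
    μ {ω | ω ∈ stayEvent x D n ∧ ω (n + 1) = t} =
      ∑ s ∈ insert x D, μ {ω | ω ∈ stayEvent x D n ∧ ω n = s} * ENNReal.ofReal (p s t) := by
  have hm : MeasurableSet {ω | ω ∈ stayEvent x D n ∧ ω (n + 1) = t} :=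
    (measurableSet_stayEvent x D n).inter (measurableSet_coord (n + 1) {t})
  rw [measure_stayEvent_split (x := x) (D := D) (n := n) hm (fun _ h => h.1)]
  refine Finset.sum_congr rfl fun s _ => ?_
  rw [← walk_step h n (stayEvent x D n) ?_ s t]
  · congr 1
    ext ω
    simp only [Set.mem_ofPred_eq]
    tauto
  · rintro ω ω' hω ⟨h0, h1⟩
    exact ⟨(hω 0 (Nat.zero_le _)) ▸ h0, fun j hj hjn => (hω j hjn) ▸ h1 j hj hjn⟩

lemma measure_stayEvent_eq_massAt [Countable S] (h : IsRandomWalk p x μ) (D : Finset S) (n : ℕ) :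
    ∀ t : S, μ {ω | ω ∈ stayEvent x D n ∧ ω n = t} = massAt p x D n t := by
  induction n with
  | zero =>
    intro t
    have : IsProbabilityMeasure μ := ⟨h.1⟩
    have h0 := walk_start_ae h
    by_cases ht : t = x
    · subst ht
      rw [massAt, if_pos rfl, ← h.1]
      refine measure_congr ?_
      filter_upwards [h0] with ω hω
      refine propext ⟨fun _ => trivial, fun _ => ⟨⟨hω, fun j _ _ => by omega⟩, hω⟩⟩
    · rw [massAt, if_neg ht]
      convert measure_empty (μ := μ)
      ext ω
      simp only [Set.mem_ofPred_eq, Set.mem_empty_iff_false, iff_false]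
      rintro ⟨⟨a, _⟩, b⟩
      exact ht (b.symm.trans a)
  | succ n ih =>
    intro t
    rw [massAt]
    split_ifs with ht
    · simp only [← ih]
      rw [← measure_stayEvent_next h]
      congr 1
      ext ω
      simp only [Set.mem_ofPred_eq, stayEvent]
      constructor
      · rintro ⟨⟨a, b⟩, c⟩
        exact ⟨⟨a, fun j h1 h2 => b j h1 (by omega)⟩, c⟩
      · rintro ⟨⟨a, b⟩, c⟩
        refine ⟨⟨a, fun j h1 h2 => ?_⟩, c⟩
        rcases Nat.le_succ_iff.1 h2 with h2 | rfl
        · exact b j h1 h2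
        · exact c ▸ ht
    · convert measure_empty (μ := μ)
      ext ω
      simp only [Set.mem_ofPred_eq, Set.mem_empty_iff_false, iff_false]
      rintro ⟨⟨_, b⟩, c⟩
      exact ht (c ▸ b (n + 1) (by omega) le_rfl)

/-- The trajectories from `x` which, after time `0`, stay in `D` until they reach `T`. -/
def reachEvent (x : S) (D T : Finset S) : Set (ℕ → S) :=
  {ω | ∃ k, ω ∈ stayEvent x D k ∧ ω (k + 1) ∈ T}

lemma measurableSet_reachEvent (x : S) (D T : Finset S) : MeasurableSet (reachEvent x D T) := by
  rw [reachEvent, Set.ofPred_exists]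
  exact MeasurableSet.iUnion fun k =>
    (measurableSet_stayEvent x D k).inter (measurableSet_coord (k + 1) (T : Set S))

/-- The reaching probability as a sum over the time `k + 1` of the first visit to `T`; in particular
it only involves transition probabilities between vertices of `D`, `T` and `x`. -/
lemma measure_reachEvent [Countable S] (h : IsRandomWalk p x μ) (D T : Finset S)
    (hDT : Disjoint D T) :
    μ (reachEvent x D T) =
      ∑' k, ∑ t ∈ T, ∑ s ∈ insert x D, massAt p x D k s * ENNReal.ofReal (p s t) := by
  have key : ∀ j k (ω : ℕ → S), j < k → ω ∈ stayEvent x D k → ω (j + 1) ∉ T := by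
    intro j k ω hjk hω hT
    exact Finset.disjoint_left.1 hDT (hω.2 (j + 1) (by omega) (by omega)) hT
  rw [reachEvent, Set.ofPred_exists, measure_iUnion]
  · refine tsum_congr fun k => ?_
    simp only [← measure_stayEvent_eq_massAt h]
    simp only [← measure_stayEvent_next h]
    rw [← measure_biUnion_finset]
    · congr 1
      ext ω
      simp
    · intro s _ t _ hst
      rw [Function.onFun, Set.disjoint_left]
      rintro ω ⟨_, h1⟩ ⟨_, h2⟩
      exact hst (h1.symm.trans h2)
    · intro s _
      exact (measurableSet_stayEvent x D k).inter (measurableSet_coord (k + 1) {s})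
  · intro j k hjk
    rw [Function.onFun, Set.disjoint_left]
    rintro ω ⟨a, b⟩ ⟨c, d⟩
    rcases lt_or_gt_of_ne hjk with hlt | hlt
    · exact key j k ω hlt c b
    · exact key k j ω hlt a d
  · intro k
    exact (measurableSet_stayEvent x D k).inter (measurableSet_coord (k + 1) (T : Set S))

/-! ### Escape from finite sets -/

/-- The probability, started from `s`, of spending the times `1, …, n` in `D`, obtained by
conditioning on the first step. -/
noncomputable def stayProb (p : S → S → ℝ) (D : Finset S) : ℕ → S → ℝ
  | 0, _ => 1
  | n + 1, s => ∑ t ∈ D, p s t * stayProb p D n t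

lemma stayProb_nonneg (hp0 : ∀ s t, 0 ≤ p s t) (D : Finset S) (n : ℕ) :
    ∀ s, 0 ≤ stayProb p D n s := by
  induction n with
  | zero => intro s; exact zero_le_one
  | succ n ih => intro s; exact Finset.sum_nonneg fun t _ => mul_nonneg (hp0 s t) (ih t)

lemma stayProb_succ_le (hp0 : ∀ s t, 0 ≤ p s t) (hp1 : ∀ s (F : Finset S), ∑ t ∈ F, p s t ≤ 1)
    (D : Finset S) (n : ℕ) : ∀ s, stayProb p D (n + 1) s ≤ stayProb p D n s := by
  induction n with
  | zero => intro s; simpa [stayProb] using hp1 s D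
  | succ n ih =>
    intro s
    exact Finset.sum_le_sum fun t _ => mul_le_mul_of_nonneg_left (ih t) (hp0 s t)

/-- The maximum principle: a harmonic function for the walk killed outside a finite set `D`
vanishes on `D` when the walk can leave `D` from everywhere. -/
lemma harmonic_le_zero (hp0 : ∀ s t, 0 ≤ p s t) (hp1 : ∀ s (F : Finset S), ∑ t ∈ F, p s t ≤ 1)
    (D : Finset S) (hD : ∀ s ∈ D, ∃ z ∉ D, Relation.ReflTransGen (fun a b => 0 < p a b) s z)
    (u : S → ℝ) (hu : ∀ s ∈ D, u s = ∑ t ∈ D, p s t * u t) : ∀ s ∈ D, u s ≤ 0 := by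
  intro s0 hs0
  obtain ⟨m, hm, hmax⟩ := D.exists_max_image u ⟨s0, hs0⟩
  refine (hmax s0 hs0).trans ?_
  by_contra! hpos
  -- the maximum propagates along every possible step, which in particular stays in `D`
  have hstep : ∀ a b, 0 < p a b → (a ∈ D ∧ u a = u m) → (b ∈ D ∧ u b = u m) := by
    rintro a b hab ⟨ha, hau⟩
    have e := hu a ha
    have hle : ∀ t ∈ D, p a t * u t ≤ p a t * u m := fun t ht =>
      mul_le_mul_of_nonneg_left (hmax t ht) (hp0 a t)
    by_cases hb : b ∈ D
    · refine ⟨hb, le_antisymm (hmax b hb) ?_⟩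
      by_contra! hlt
      have h1 : ∑ t ∈ D, p a t * u t < ∑ t ∈ D, p a t * u m :=
        Finset.sum_lt_sum hle ⟨b, hb, mul_lt_mul_of_pos_left hlt hab⟩
      rw [← Finset.sum_mul] at h1
      nlinarith [hp1 a D]
    · exfalso
      have h1 : ∑ t ∈ D, p a t * u t ≤ ∑ t ∈ D, p a t * u m := Finset.sum_le_sum hle
      have h2 := hp1 a (insert b D)
      rw [Finset.sum_insert hb] at h2
      rw [← Finset.sum_mul] at h1
      nlinarith
  obtain ⟨z, hz, hpath⟩ := hD m hm
  have : z ∈ D ∧ u z = u m := by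
    clear hz
    induction hpath with
    | refl => exact ⟨hm, rfl⟩
    | tail _ hbc ih => exact hstep _ _ hbc ih
  exact hz this.1

lemma stayProb_tendsto_zero (hp0 : ∀ s t, 0 ≤ p s t)
    (hp1 : ∀ s (F : Finset S), ∑ t ∈ F, p s t ≤ 1)
    (D : Finset S) (hD : ∀ s ∈ D, ∃ z ∉ D, Relation.ReflTransGen (fun a b => 0 < p a b) s z)
    (s : S) : Tendsto (fun n => stayProb p D n s) atTop (𝓝 0) := by
  have hlim : ∀ s, Tendsto (fun n => stayProb p D n s) atTop (𝓝 (⨅ n, stayProb p D n s)) :=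
    fun s => tendsto_atTop_ciInf
      (antitone_nat_of_succ_le fun n => stayProb_succ_le hp0 hp1 D n s)
      ⟨0, by rintro _ ⟨n, rfl⟩; exact stayProb_nonneg hp0 D n s⟩
  have hnn : ∀ s, 0 ≤ ⨅ n, stayProb p D n s := fun s =>
    le_ciInf fun n => stayProb_nonneg hp0 D n s
  have hharm : ∀ s, (⨅ n, stayProb p D n s) = ∑ t ∈ D, p s t * ⨅ n, stayProb p D n t := by
    intro s
    refine tendsto_nhds_unique ((tendsto_add_atTop_iff_nat 1).2 (hlim s)) ?_
    exact tendsto_finsetSum _ fun t _ => (hlim t).const_mul _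
  have hzero : ∀ t ∈ D, (⨅ n, stayProb p D n t) = 0 := fun t ht =>
    le_antisymm (harmonic_le_zero hp0 hp1 D hD _ (fun s _ => hharm s) t ht) (hnn t)
  have : (⨅ n, stayProb p D n s) = 0 := by
    rw [hharm s]
    exact Finset.sum_eq_zero fun t ht => by rw [hzero t ht, mul_zero]
  simpa [this] using hlim s

/-- Duality between the forward masses `massAt` and the backward probabilities `stayProb`. -/
lemma sum_massAt_mul_stayProb (hp0 : ∀ s t, 0 ≤ p s t) (D : Finset S) (n : ℕ) :
    ∀ m, ∑ t ∈ insert x D, massAt p x D n t * ENNReal.ofReal (stayProb p D m t) =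
      ENNReal.ofReal (stayProb p D (n + m) x) := by
  induction n with
  | zero =>
    intro m
    simp [massAt]
  | succ n ih =>
    intro m
    rw [show n + 1 + m = n + (m + 1) by omega, ← ih (m + 1)]
    have h1 : ∑ t ∈ insert x D, massAt p x D (n + 1) t * ENNReal.ofReal (stayProb p D m t) =
        ∑ t ∈ D, massAt p x D (n + 1) t * ENNReal.ofReal (stayProb p D m t) := by
      refine (Finset.sum_subset (Finset.subset_insert x D) fun t _ ht => ?_).symm
      rw [massAt, if_neg ht, zero_mul]
    rw [h1]
    have h2 : ∀ t ∈ D, massAt p x D (n + 1) t * ENNReal.ofReal (stayProb p D m t) =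
        ∑ s ∈ insert x D, massAt p x D n s *
          (ENNReal.ofReal (p s t) * ENNReal.ofReal (stayProb p D m t)) := by
      intro t ht
      rw [massAt, if_pos ht, Finset.sum_mul]
      exact Finset.sum_congr rfl fun s _ => by rw [mul_assoc]
    rw [Finset.sum_congr rfl h2, Finset.sum_comm]
    refine Finset.sum_congr rfl fun s _ => ?_
    rw [← Finset.mul_sum, stayProb, ENNReal.ofReal_sum_of_nonneg
      fun t _ => mul_nonneg (hp0 s t) (stayProb_nonneg hp0 D m t)]
    simp only [ENNReal.ofReal_mul (hp0 _ _)]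

/-- A walk almost surely does not stay forever in a finite set from which it can escape. -/
lemma measure_stay_forever [Countable S] (h : IsRandomWalk p x μ) (hp0 : ∀ s t, 0 ≤ p s t)
    (hp1 : ∀ s (F : Finset S), ∑ t ∈ F, p s t ≤ 1)
    (D : Finset S) (hD : ∀ s ∈ D, ∃ z ∉ D, Relation.ReflTransGen (fun a b => 0 < p a b) s z) :
    ∀ᵐ ω ∂μ, ¬ ∀ k, 1 ≤ k → ω k ∈ D := by
  have hn : ∀ n, μ (stayEvent x D n) = ENNReal.ofReal (stayProb p D n x) := by
    intro n
    rw [measure_stayEvent_split (measurableSet_stayEvent x D n) subset_rfl]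
    have := sum_massAt_mul_stayProb (x := x) hp0 D n 0
    simp only [stayProb, ENNReal.ofReal_one, mul_one, add_zero] at this
    rw [← this]
    exact Finset.sum_congr rfl fun s _ => measure_stayEvent_eq_massAt h D n s
  have hlim : Tendsto (fun n => μ (stayEvent x D n)) atTop (𝓝 0) := by
    simp only [hn]
    simpa using ENNReal.tendsto_ofReal (stayProb_tendsto_zero hp0 hp1 D hD x)
  have hnull : μ (⋂ n, stayEvent x D n) = 0 :=
    le_antisymm (ge_of_tendsto' hlim fun n => measure_mono (Set.iInter_subset _ n)) zero_le
  filter_upwards [walk_start_ae h, measure_eq_zero_iff_ae_notMem.1 hnull] with ω h0 h1 h2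
  exact h1 (Set.mem_iInter.2 fun n => ⟨h0, fun j hj _ => h2 j hj⟩)

end Walk

/-! ### Transporting hitting probabilities along an embedding -/

section Coupling
attribute [local instance] trajMS

variable {S S' : Type} {p : S → S → ℝ} {p' : S' → S' → ℝ} {x : S}

lemma massAt_map (e : S ↪ S') (D : Finset S)
    (hpp : ∀ s ∈ insert x D, ∀ t ∈ D, p' (e s) (e t) = p s t) (n : ℕ) :
    ∀ t, massAt p' (e x) (D.map e) n (e t) = massAt p x D n t := by
  induction n with
  | zero => intro t; simp [massAt]
  | succ n ih =>
    intro t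
    simp only [massAt, Finset.mem_map']
    split_ifs with ht
    · rw [← Finset.map_insert, Finset.sum_map]
      exact Finset.sum_congr rfl fun s hs => by rw [ih, hpp s hs t ht]
    · rfl

/-- Two walks whose transition probabilities agree along an embedding `e` on the relevant
vertices reach `T` through `D` with the same probability. -/
lemma measure_reachEvent_map [Countable S] [Countable S'] {μ : TrajMeasure S}
    {μ' : TrajMeasure S'} (e : S ↪ S') (h : IsRandomWalk p x μ) (h' : IsRandomWalk p' (e x) μ')
    (D T : Finset S) (hDT : Disjoint D T)
    (hpp : ∀ s ∈ insert x D, ∀ t ∈ D ∪ T, p' (e s) (e t) = p s t) :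
    μ' (reachEvent (e x) (D.map e) (T.map e)) = μ (reachEvent x D T) := by
  rw [measure_reachEvent h D T hDT, measure_reachEvent h' _ _ ((Finset.disjoint_map e).2 hDT)]
  refine tsum_congr fun k => ?_
  rw [Finset.sum_map]
  refine Finset.sum_congr rfl fun t ht => ?_
  rw [← Finset.map_insert, Finset.sum_map]
  refine Finset.sum_congr rfl fun s hs => ?_
  rw [massAt_map e D (fun s hs t ht => hpp s hs t (Finset.mem_union_left _ ht)),
    hpp s hs t (Finset.mem_union_right _ ht)]

end Coupling

/-! ### The extended graph -/

namespace WeightedGraph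

variable {V : Type} (G : WeightedGraph V) (A : Finset V)

lemma summable_ite_notMem (v : V) : Summable fun z => if z ∈ A then 0 else G.c v z :=
  (G.row_summable v).of_nonneg_of_le (fun z => by split_ifs; exacts [le_rfl, G.nonneg v z])
    (fun z => by split_ifs; exacts [G.nonneg v z, le_rfl])

lemma ite_notMem_nonneg (v z : V) : 0 ≤ if z ∈ A then 0 else G.c v z := by
  split_ifs
  exacts [le_rfl, G.nonneg v z]

lemma extW_nonneg (s t : V ⊕ V) : 0 ≤ G.extW A s t := by
  have : ∀ v, 0 ≤ ∑' z, if z ∈ A then 0 else G.c v z :=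
    fun v => tsum_nonneg (G.ite_notMem_nonneg A v)
  rcases s with s | s <;> rcases t with t | t <;> simp only [extW]
  · split_ifs
    exacts [G.nonneg s t, le_rfl]
  · split_ifs
    exacts [this s, le_rfl]
  · split_ifs
    exacts [this t, le_rfl]
  · exact le_rfl

/-- The total weight at a vertex of `A` is unchanged by passing to the extended graph. -/
lemma hasSum_extW_inl {v : V} (hv : v ∈ A) : HasSum (G.extW A (Sum.inl v)) (G.deg v) := by
  have h1 : HasSum (G.extW A (Sum.inl v) ∘ Sum.inl) (∑ z ∈ A, G.c v z) := by
    have := hasSum_sum_of_ne_finset_zero (L := SummationFilter.unconditional V) (f := G.extW A (Sum.inl v) ∘ Sum.inl) (s := A)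
      (fun z hz => by simp [extW, hz])
    convert this using 1
    exact Finset.sum_congr rfl fun z hz => by simp [extW, hv, hz]
  have h2 : HasSum (G.extW A (Sum.inl v) ∘ Sum.inr) (∑' z, if z ∈ A then 0 else G.c v z) := by
    have := hasSum_single (L := SummationFilter.unconditional V) (f := G.extW A (Sum.inl v) ∘ Sum.inr) v
      (fun z hz => by simp [extW, hz.symm])
    simpa [extW, hv] using this
  have h3 : G.deg v = ∑ z ∈ A, G.c v z + ∑' z, if z ∈ A then 0 else G.c v z := by
    have h4 : HasSum (fun z => if z ∈ A then G.c v z else 0) (∑ z ∈ A, G.c v z) := by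
      have := hasSum_sum_of_ne_finset_zero (L := SummationFilter.unconditional V) (f := fun z => if z ∈ A then G.c v z else 0) (s := A)
        (fun z hz => by simp [hz])
      convert this using 1
      exact Finset.sum_congr rfl fun z hz => by simp [hz]
    rw [deg, ← (h4.add (G.summable_ite_notMem A v).hasSum).tsum_eq]
    exact tsum_congr fun z => by split_ifs <;> simp
  rw [h3]
  exact HasSum.sum h1 h2

lemma summable_extW (s : V ⊕ V) : Summable (G.extW A s) := by
  rcases s with v | v
  · by_cases hv : v ∈ A
    · exact (G.hasSum_extW_inl A hv).summable
    · convert summable_zero using 1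
      funext t
      rcases t with t | t <;> simp [extW, hv]
  · refine summable_of_ne_finset_zero (s := {Sum.inl v}) fun t ht => ?_
    rcases t with t | t
    · have : t ≠ v := by simpa using ht
      simp [extW, this]
    · rfl

lemma extDeg_inl {v : V} (hv : v ∈ A) : G.extDeg A (Sum.inl v) = G.deg v :=
  (G.hasSum_extW_inl A hv).tsum_eq

lemma extTrans_inl_inl {v w : V} (hv : v ∈ A) (hw : w ∈ A) :
    G.extTrans A (Sum.inl v) (Sum.inl w) = G.trans v w := by
  simp [extTrans, trans, G.extDeg_inl A hv, extW, hv, hw]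

lemma extTrans_nonneg (s t : V ⊕ V) : 0 ≤ G.extTrans A s t :=
  div_nonneg (G.extW_nonneg A s t) (tsum_nonneg (G.extW_nonneg A s))

lemma sum_extTrans_le (s : V ⊕ V) (F : Finset (V ⊕ V)) : ∑ t ∈ F, G.extTrans A s t ≤ 1 := by
  simp only [extTrans]
  rw [← Finset.sum_div]
  exact div_le_one_of_le₀
    ((G.summable_extW A s).sum_le_tsum F fun t _ => G.extW_nonneg A s t)
    (tsum_nonneg (G.extW_nonneg A s))

lemma extTrans_pos {s t : V ⊕ V} (h : 0 < G.extW A s t) : 0 < G.extTrans A s t :=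
  div_pos h (h.trans_le ((G.summable_extW A s).le_tsum t fun u _ => G.extW_nonneg A s u))

lemma extW_inr_inl_pos {v : V} (hv : v ∈ G.innerBoundary A) :
    0 < G.extW A (Sum.inr v) (Sum.inl v) := by
  obtain ⟨hA, w, hw, hc⟩ := hv
  simp only [extW, hA, and_self, if_true]
  exact (G.summable_ite_notMem A v).tsum_pos (G.ite_notMem_nonneg A v) w (by simpa [hw] using hc)

lemma extW_inl_inr_eq_zero {v : V} (hv : v ∉ G.innerBoundary A) (w : V) :
    G.extW A (Sum.inl v) (Sum.inr w) = 0 := by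
  simp only [extW]
  split_ifs with h
  · have : ∀ z, (if z ∈ A then 0 else G.c v z) = 0 := by
      intro z
      split_ifs with hz
      · rfl
      · by_contra hne
        exact hv ⟨h.2, z, hz, lt_of_le_of_ne (G.nonneg v z) (Ne.symm hne)⟩
    simp [this]
  · rfl

/-- The vertex set of the extended graph, as a subset of `V ⊕ V`. -/
noncomputable def extVerts : Finset (V ⊕ V) :=
  A.map Function.Embedding.inl ∪
    (A.filter (· ∈ G.innerBoundary A)).map Function.Embedding.inr

lemma inl_mem_extVerts {v : V} : Sum.inl v ∈ G.extVerts A ↔ v ∈ A := by simp [extVerts]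

lemma inr_mem_extVerts {v : V} : Sum.inr v ∈ G.extVerts A ↔ v ∈ G.innerBoundary A := by
  simp only [extVerts, Finset.mem_union, Finset.mem_map, Finset.mem_filter]
  constructor
  · rintro (⟨a, _, h⟩ | ⟨a, ⟨_, h⟩, h'⟩)
    · cases h
    · cases h'; exact h
  · exact fun h => Or.inr ⟨v, ⟨h.1, h⟩, rfl⟩

lemma extTrans_eq_zero {s t : V ⊕ V} (hs : s ∈ G.extVerts A) (ht : t ∉ G.extVerts A) :
    G.extTrans A s t = 0 := by
  have : G.extW A s t = 0 := by
    rcases s with s | s <;> rcases t with t | t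
    · rw [inl_mem_extVerts] at ht
      simp [extW, ht]
    · rw [inr_mem_extVerts] at ht
      by_cases hst : s = t
      · exact G.extW_inl_inr_eq_zero A (hst ▸ ht) t
      · simp [extW, hst]
    · rw [inl_mem_extVerts] at ht
      simp [extW, ht]
    · rfl
  rw [extTrans, this, zero_div]

lemma extVerts_reaches (hA : ∀ v ∈ A, ∀ w ∈ A,
      Relation.ReflTransGen (fun a b => a ∈ A ∧ b ∈ A ∧ 0 < G.c a b) v w)
    {x : V} (hx : x ∈ A) {s : V ⊕ V} (hs : s ∈ G.extVerts A) :
    Relation.ReflTransGen (fun a b => 0 < G.extTrans A a b) s (Sum.inl x) := by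
  have key : ∀ v ∈ A, Relation.ReflTransGen (fun a b => 0 < G.extTrans A a b)
      (Sum.inl v) (Sum.inl x) := by
    intro v hv
    refine Relation.ReflTransGen.lift Sum.inl ?_ _ _ (hA v hv x hx)
    rintro a b ⟨ha, hb, hc⟩
    exact G.extTrans_pos A (by simpa [extW, ha, hb] using hc)
  rcases s with v | v
  · exact key v ((G.inl_mem_extVerts A).1 hs)
  · have hv := (G.inr_mem_extVerts A).1 hs
    exact Relation.ReflTransGen.head (G.extTrans_pos A (G.extW_inr_inl_pos A hv)) (key v hv.1)

end WeightedGraph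

/-! ### The walk on the extended graph and the exhaustion limit -/

section Main
attribute [local instance] trajMS

variable {V : Type} (G : WeightedGraph V) (A : Finset V) {x y : V}

/-- The extended graph is finite and connected, so its walk returns to the starting point `x`
almost surely. -/
lemma ext_returns [Countable V] (hA : ∀ v ∈ A, ∀ w ∈ A,
      Relation.ReflTransGen (fun a b => a ∈ A ∧ b ∈ A ∧ 0 < G.c a b) v w)
    (hx : x ∈ A) {ν : TrajMeasure (V ⊕ V)} (hν : IsRandomWalk (G.extTrans A) (Sum.inl x) ν) :
    ∀ᵐ ω ∂ν, hitTime1 {Sum.inl x} ω ≠ ⊤ := by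
  have h1 := walk_ae_mem hν (G.extVerts A : Set (V ⊕ V)) ((G.inl_mem_extVerts A).2 hx)
    (fun s hs t ht => G.extTrans_eq_zero A hs ht)
  have h2 := measure_stay_forever hν (G.extTrans_nonneg A) (G.sum_extTrans_le A)
    ((G.extVerts A).erase (Sum.inl x)) (fun s hs => ⟨Sum.inl x, by simp,
      G.extVerts_reaches A hA hx (Finset.mem_of_mem_erase hs)⟩)
  filter_upwards [h1, h2] with ω h1 h2 htop
  rw [hitTime1_eq_top_iff] at htop
  exact h2 fun k hk => Finset.mem_erase.2 ⟨htop k hk, h1 k⟩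

/-- Up to null sets, the boundary copies are not visited before `x` and `y` exactly when the walk
goes to `{x, y}` through the other vertices of `A`. -/
lemma ext_event_ae [Countable V] (hA : ∀ v ∈ A, ∀ w ∈ A,
      Relation.ReflTransGen (fun a b => a ∈ A ∧ b ∈ A ∧ 0 < G.c a b) v w)
    (hx : x ∈ A) (hxy : x ≠ y)
    {ν : TrajMeasure (V ⊕ V)} (hν : IsRandomWalk (G.extTrans A) (Sum.inl x) ν) :
    ∀ᵐ ω ∂ν, hitTime (G.boundaryCopies A) ω <
        min (hitTime1 {Sum.inl x} ω) (hitTime {Sum.inl y} ω) ↔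
      ω ∉ reachEvent (Sum.inl x) ((A \ {x, y}).map Function.Embedding.inl)
        (({x, y} : Finset V).map Function.Embedding.inl) := by
  have h1 := walk_ae_mem hν (G.extVerts A : Set (V ⊕ V)) ((G.inl_mem_extVerts A).2 hx)
    (fun s hs t ht => G.extTrans_eq_zero A hs ht)
  filter_upwards [h1, walk_start_ae hν, ext_returns G A hA hx hν] with ω h1 h0 hret
  constructor
  · rintro hlt ⟨k, ⟨_, hk⟩, hT⟩
    obtain ⟨j, ⟨v, hv, hj⟩, hjlt⟩ := hitTime_lt_iff.1 hlt
    rw [lt_min_iff, coe_lt_hitTime1_iff, coe_lt_hitTime_iff] at hjlt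
    have hj0 : j ≠ 0 := by
      rintro rfl
      rw [h0] at hj
      cases hj
    have hjk : k + 1 ≤ j := by
      by_contra! hc
      have := hk j (by omega) (by omega)
      rw [hj] at this
      simp at this
    simp only [Finset.mem_map, Finset.mem_insert, Finset.mem_singleton] at hT
    obtain ⟨w, rfl | rfl, hw⟩ := hT
    · exact hjlt.1 (k + 1) (by omega) hjk hw.symm
    · exact hjlt.2 (k + 1) hjk hw.symm
  · intro hno
    by_contra hle
    -- the first time after `0` at which the walk is at `x` or `y`
    have hex : ∃ k, ω (k + 1) = Sum.inl x ∨ ω (k + 1) = Sum.inl y := by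
      rw [Ne, hitTime1_eq_top_iff] at hret
      push Not at hret
      obtain ⟨k, hk, hkx⟩ := hret
      exact ⟨k - 1, Or.inl (by rw [Nat.sub_add_cancel hk]; exact hkx)⟩
    have hmin : ∀ j, 1 ≤ j → j ≤ Nat.find hex → ω j ≠ Sum.inl x ∧ ω j ≠ Sum.inl y := by
      intro j hj1 hj
      have := Nat.find_min hex (m := j - 1) (by omega)
      rw [Nat.sub_add_cancel hj1] at this
      exact not_or.1 this
    refine hno ⟨Nat.find hex, ⟨h0, fun j hj1 hj => ?_⟩, ?_⟩
    · have hne := hmin j hj1 hj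
      have hmem := h1 j
      rcases hωj : ω j with v | v
      · rw [hωj] at hne hmem
        have hvA := (G.inl_mem_extVerts A).1 hmem
        simp only [ne_eq, Sum.inl.injEq] at hne
        simp [hvA, hne.1, hne.2]
      · rw [hωj] at hmem
        exfalso
        refine hle (hitTime_lt_iff.2 ⟨j, ⟨v, (G.inr_mem_extVerts A).1 hmem, hωj⟩, ?_⟩)
        rw [lt_min_iff, coe_lt_hitTime1_iff, coe_lt_hitTime_iff]
        refine ⟨fun i hi hij => (hmin i hi (hij.trans hj)).1, fun i hij => ?_⟩
        rcases Nat.eq_zero_or_pos i with rfl | hi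
        · rw [h0]
          simpa using hxy
        · exact (hmin i hi (hij.trans hj)).2
    · rcases Nat.find_spec hex with h | h <;> rw [h] <;> simp

/-- On the left the times `τ_x⁺` and `τ_y` are strictly ordered. They can only agree when both are
infinite, which is a null event by `ext_returns`. -/
lemma ext_sum_eq [Countable V] (hA : ∀ v ∈ A, ∀ w ∈ A,
      Relation.ReflTransGen (fun a b => a ∈ A ∧ b ∈ A ∧ 0 < G.c a b) v w)
    (hx : x ∈ A) (hxy : x ≠ y)
    {ν : TrajMeasure (V ⊕ V)} (hν : IsRandomWalk (G.extTrans A) (Sum.inl x) ν) :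
    ν {ω | hitTime (G.boundaryCopies A) ω < hitTime1 {Sum.inl x} ω ∧
          hitTime1 {Sum.inl x} ω < hitTime {Sum.inl y} ω} +
        ν {ω | hitTime (G.boundaryCopies A) ω < hitTime {Sum.inl y} ω ∧
          hitTime {Sum.inl y} ω < hitTime1 {Sum.inl x} ω} =
      ν {ω | hitTime (G.boundaryCopies A) ω <
        min (hitTime1 {Sum.inl x} ω) (hitTime {Sum.inl y} ω)} := by
  rw [← measure_union]
  · refine measure_congr (Filter.eventuallyEq_set.2 ?_)
    filter_upwards [ext_returns G A hA hx hν] with ω hret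
    simp only [Set.mem_union, Set.mem_ofPred_eq, lt_min_iff]
    constructor
    · rintro (⟨a, b⟩ | ⟨a, b⟩)
      · exact ⟨a, a.trans b⟩
      · exact ⟨a.trans b, a⟩
    · rintro ⟨a, b⟩
      rcases lt_trichotomy (hitTime1 {Sum.inl x} ω) (hitTime {Sum.inl y} ω) with h | h | h
      · exact Or.inl ⟨a, h⟩
      · exfalso
        -- at a common finite hitting time the walk would be at `x` and at `y`
        obtain ⟨k, hk⟩ := ENat.ne_top_iff_exists.1 hret
        have hx' : ¬ ((k : ℕ∞) < hitTime1 {Sum.inl x} ω) := by rw [← hk]; exact lt_irrefl _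
        have hy' : ¬ ((k : ℕ∞) < hitTime {Sum.inl y} ω) := by rw [← h, ← hk]; exact lt_irrefl _
        rw [coe_lt_hitTime1_iff] at hx'
        rw [coe_lt_hitTime_iff] at hy'
        push Not at hx' hy'
        obtain ⟨i, hi1, hik, hi⟩ := hx'
        obtain ⟨j, hjk, hj⟩ := hy'
        have hi2 : k ≤ i := by
          by_contra! hc
          exact coe_lt_hitTime1_iff.1 (hk ▸ Nat.cast_lt.2 hc) i hi1 le_rfl hi
        have hj2 : k ≤ j := by
          by_contra! hc
          exact coe_lt_hitTime_iff.1 (h ▸ hk ▸ Nat.cast_lt.2 hc) j le_rfl hj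
        have hij : i = j := by omega
        subst hij
        have : (Sum.inl x : V ⊕ V) = Sum.inl y := by
          rw [← Set.mem_singleton_iff.1 hi, ← Set.mem_singleton_iff.1 hj]
        exact hxy (Sum.inl.inj this)
      · exact Or.inr ⟨b, h⟩
  · rw [Set.disjoint_left]
    rintro ω ⟨_, a⟩ ⟨_, b⟩
    exact lt_asymm a b
  · exact (measurableSet_hitTime_lt _ (measurableSet_coe_lt_hitTime _)).inter
      (measurableSet_hitTime_lt _ (measurableSet_coe_lt_hitTime1 _))

/-- Inside `A` the walk on the extended graph and the walk on `G` have the same transition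
probabilities, so the event of `ext_event_ae` can be evaluated for the walk on `G`. -/
lemma ext_measure_eq [Countable V] {μ : TrajMeasure V} (hμ : IsRandomWalk G.trans x μ)
    (hA : ∀ v ∈ A, ∀ w ∈ A,
      Relation.ReflTransGen (fun a b => a ∈ A ∧ b ∈ A ∧ 0 < G.c a b) v w)
    (hx : x ∈ A) (hy : y ∈ A) (hxy : x ≠ y)
    {ν : TrajMeasure (V ⊕ V)} (hν : IsRandomWalk (G.extTrans A) (Sum.inl x) ν) :
    ν {ω | hitTime (G.boundaryCopies A) ω <
        min (hitTime1 {Sum.inl x} ω) (hitTime {Sum.inl y} ω)} =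
      1 - μ (reachEvent x (A \ {x, y}) {x, y}) := by
  have : IsProbabilityMeasure ν := ⟨hν.1⟩
  rw [measure_congr (s := {ω | hitTime (G.boundaryCopies A) ω <
      min (hitTime1 {Sum.inl x} ω) (hitTime {Sum.inl y} ω)}) (t := (reachEvent (Sum.inl x) ((A \ {x, y}).map Function.Embedding.inl)
      (({x, y} : Finset V).map Function.Embedding.inl))ᶜ)
      (Filter.eventuallyEq_set.2 (ext_event_ae G A hA hx hxy hν)),
    prob_compl_eq_one_sub (measurableSet_reachEvent _ _ _)]
  congr 1
  refine measure_reachEvent_map Function.Embedding.inl hμ hν _ _ Finset.sdiff_disjoint ?_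
  intro s hs t ht
  refine G.extTrans_inl_inl A ?_ ?_
  · rcases Finset.mem_insert.1 hs with rfl | hs
    exacts [hx, (Finset.mem_sdiff.1 hs).1]
  · simp only [Finset.mem_union, Finset.mem_sdiff, Finset.mem_insert, Finset.mem_singleton] at ht
    rcases ht with ht | rfl | rfl
    exacts [ht.1, hx, hy]

/-- As `Vₙ` exhausts `V`, returning to `{x, y}` within `Vₙ` becomes returning to `{x, y}`. -/
lemma tendsto_reachEvent {μ : TrajMeasure V} (hμ : IsRandomWalk G.trans x μ) (hxy : x ≠ y)
    (Vn : ℕ → Finset V) (hVn : G.IsExhaustion Vn) :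
    Tendsto (fun n => 1 - μ (reachEvent x (Vn n \ {x, y}) {x, y})) atTop
      (𝓝 (μ {ω | hitTime1 {x} ω = ⊤ ∧ hitTime {y} ω = ⊤})) := by
  have : IsProbabilityMeasure μ := ⟨hμ.1⟩
  have hmono : Monotone Vn := monotone_nat_of_le_succ hVn.1
  have hev : ∀ v, ∀ᶠ n in atTop, v ∈ Vn n := by
    intro v
    obtain ⟨n, hn⟩ := hVn.2.1 v
    exact eventually_atTop.2 ⟨n, fun m hm => hmono hm hn⟩
  have hUmeas : MeasurableSet (⋃ n, reachEvent x (Vn n \ {x, y}) {x, y}) :=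
    MeasurableSet.iUnion fun n => measurableSet_reachEvent _ _ _
  have hae : ∀ᵐ ω ∂μ, ω ∈ {ω | hitTime1 {x} ω = ⊤ ∧ hitTime {y} ω = ⊤} ↔
      ω ∈ (⋃ n, reachEvent x (Vn n \ {x, y}) {x, y})ᶜ := by
    filter_upwards [walk_start_ae hμ] with ω h0
    rw [Set.mem_compl_iff, hitTime1_eq_top_iff, hitTime_eq_top_iff,
      Set.mem_iUnion]
    constructor
    · rintro ⟨hx, hy⟩ ⟨n, k, _, hT⟩
      rcases Finset.mem_insert.1 hT with h | h
      · exact hx (k + 1) (by omega) h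
      · exact hy (k + 1) (Finset.mem_singleton.1 h)
    · intro hno
      by_contra hc
      have hex : ∃ k, ω (k + 1) = x ∨ ω (k + 1) = y := by
        by_contra! hall
        refine hc ⟨fun k hk => ?_, fun k => ?_⟩
        · have := (hall (k - 1)).1
          rwa [Nat.sub_add_cancel hk] at this
        · rcases k with _ | k
          · rw [h0]; exact hxy
          · exact (hall k).2
      obtain ⟨n, hn⟩ := ((Finset.range (Nat.find hex + 1)).eventually_all (l := atTop)
        (p := fun j n => ω j ∈ Vn n) |>.2 fun j _ => hev (ω j)).exists
      refine hno ⟨n, Nat.find hex, ⟨h0, fun j hj1 hj => ?_⟩, ?_⟩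
      · have := Nat.find_min hex (m := j - 1) (by omega)
        rw [Nat.sub_add_cancel hj1] at this
        simp only [Finset.mem_sdiff, Finset.mem_insert, Finset.mem_singleton]
        exact ⟨hn j (Finset.mem_range.2 (by omega)), this⟩
      · simpa using Nat.find_spec hex
  rw [measure_congr (Filter.eventuallyEq_set.2 hae), prob_compl_eq_one_sub hUmeas]
  refine ENNReal.Tendsto.sub tendsto_const_nhds (tendsto_measure_iUnion_atTop ?_)
    (Or.inl ENNReal.one_ne_top)
  rintro m n hmn ω ⟨k, ⟨h0, hk⟩, hT⟩
  exact ⟨k, ⟨h0, fun j h1 h2 =>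
    Finset.sdiff_subset_sdiff (hmono hmn) subset_rfl (hk j h1 h2)⟩, hT⟩

end Main

/-- For an infinite, connected weighted graph `G` with finite
exhaustion `(Vₙ)` and distinct `x, y`:
`P_x[τ_x⁺ = τ_y = ∞] = limₙ P̄ⁿ_x[τ_{Vₙ*} < min(τ_x⁺, τ_y)]
  = limₙ (P̄ⁿ_x[τ_{Vₙ*} < τ_x⁺ < τ_y] + P̄ⁿ_x[τ_{Vₙ*} < τ_y < τ_x⁺])`. -/
theorem never_return_prob_eq_lim_boundary_probs
    {V : Type} [Countable V] [Infinite V] (G : WeightedGraph V) (hconn : G.Connected)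
    (P : V → TrajMeasure V) (hP : ∀ x : V, IsRandomWalk G.trans x (P x))
    (Vn : ℕ → Finset V) (hVn : G.IsExhaustion Vn)
    (Pbar : ℕ → V → TrajMeasure (V ⊕ V))
    (hPbar : ∀ n : ℕ, ∀ x ∈ Vn n,
      IsRandomWalk (G.extTrans (Vn n)) (Sum.inl x) (Pbar n x))
    (x y : V) (hxy : x ≠ y) :
    Filter.Tendsto
        (fun n : ℕ => Pbar n x
          {ω | hitTime (G.boundaryCopies (Vn n)) ω <
              min (hitTime1 {Sum.inl x} ω) (hitTime {Sum.inl y} ω)})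
        Filter.atTop
        (nhds (P x {ω | hitTime1 {x} ω = ⊤ ∧ hitTime {y} ω = ⊤})) ∧
      Filter.Tendsto
        (fun n : ℕ =>
          Pbar n x {ω | hitTime (G.boundaryCopies (Vn n)) ω < hitTime1 {Sum.inl x} ω ∧
              hitTime1 {Sum.inl x} ω < hitTime {Sum.inl y} ω} +
          Pbar n x {ω | hitTime (G.boundaryCopies (Vn n)) ω < hitTime {Sum.inl y} ω ∧
              hitTime {Sum.inl y} ω < hitTime1 {Sum.inl x} ω})
        Filter.atTop
        (nhds (P x {ω | hitTime1 {x} ω = ⊤ ∧ hitTime {y} ω = ⊤})) := by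

  have hmono : Monotone Vn := monotone_nat_of_le_succ hVn.1
  have hev : ∀ v, ∀ᶠ n in atTop, v ∈ Vn n := by
    intro v
    obtain ⟨n, hn⟩ := hVn.2.1 v
    exact eventually_atTop.2 ⟨n, fun m hm => hmono hm hn⟩
  have hlim := tendsto_reachEvent G (hP x) hxy Vn hVn
  constructor
  · refine hlim.congr' ?_
    filter_upwards [hev x, hev y] with n hx hy
    exact (ext_measure_eq G (Vn n) (hP x) (hVn.2.2 n) hx hy hxy (hPbar n x hx)).symm
  · refine hlim.congr' ?_
    filter_upwards [hev x, hev y] with n hx hy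
    rw [ext_sum_eq G (Vn n) (hVn.2.2 n) hx hxy (hPbar n x hx)]
    exact (ext_measure_eq G (Vn n) (hP x) (hVn.2.2 n) hx hy hxy (hPbar n x hx)).symm
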